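/- Let K be a field of characteristic zero equipped with a derivation δ : K → K, let t ∈ K with δ(t) = 1, and let v₁, v₂, v₃ ∈ K be constants (δ(vᵢ) = 0) with v₁ + v₂ + v₃ = 0. Suppose q, p ∈ K with q ≠ 0 satisfy the Hamiltonian system δ(q) = 2pq − q² − 2tq + 2(v₁ − v₂) and δ(p) = 2pq − p² + 2tp + 2(v₁ − v₃). Then, with α = 3v₃ + 1 and β = −2(v₂ − v₁)², the element q satisfies the fourth Painlevé equation: δ(δ(q)) = (δ(q))²/(2q) + (3/2)·q³ + 4t·q² + 2(t² − α)·q + β/q. -/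

import Mathlib

/-!
The first equation of the system is affine in `p`, with coefficient `2q`. Differentiating it and
inserting both equations makes `2q * δ (δ q) - (δ q)²` a polynomial in `q`, `p`, `t` and the
parameters in which `p` cancels; dividing by `2q` gives the fourth Painlevé equation.
The system depends only on `a = v₁ - v₂` and `b = v₁ - v₃`, and the computation yields
`α = a - 2b + 1 = 2v₃ - v₁ - v₂ + 1` and `β = -2a²`; when `v₁ + v₂ + v₃ = 0`, this `α` is `3v₃ + 1`.
-/

/-- An additive map satisfying the Leibniz rule on a commutative ring, as a `ℤ`-linear
`Derivation`, which makes the library's calculus of derivations available for it. -/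
def derivationOfLeibniz {A : Type*} [CommRing A] (δ : A → A)
    (hadd : ∀ a b, δ (a + b) = δ a + δ b) (hleib : ∀ a b, δ (a * b) = a * δ b + δ a * b) :
    Derivation ℤ A A :=
  .mk' (AddMonoidHom.mk' δ hadd).toIntLinearMap fun a b ↦
    (hleib a b).trans (congrArg (a * δ b + ·) (mul_comm (δ a) b))

section CommRing

variable {R A : Type*} [CommSemiring R] [CommRing A] [Algebra R A] (D : Derivation R A A)
  {t a b q p : A}

theorem second_derivative_of_SIV (ht : D t = 1) (ha : D a = 0)
    (hq : D q = 2 * p * q - q ^ 2 - 2 * t * q + 2 * a) :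
    D (D q) = 2 * q * D p + 2 * (p - q - t) * D q - 2 * q := by
  have h2 : D 2 = 0 := D.map_natCast 2
  have hD := congrArg D hq
  simp only [map_add, map_sub, D.leibniz, D.leibniz_pow, h2, ht, ha, smul_eq_mul,
    nsmul_eq_mul] at hD
  linear_combination hD

theorem PIV_polynomial_of_SIV (ht : D t = 1) (ha : D a = 0)
    (hq : D q = 2 * p * q - q ^ 2 - 2 * t * q + 2 * a)
    (hp : D p = 2 * p * q - p ^ 2 + 2 * t * p + 2 * b) :
    2 * q * D (D q) = D q ^ 2 + 3 * q ^ 4 + 8 * t * q ^ 3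
      + 4 * (t ^ 2 - (a - 2 * b + 1)) * q ^ 2 + 2 * (-2 * a ^ 2) := by
  rw [second_derivative_of_SIV D ht ha hq, hp, hq]
  ring

end CommRing

theorem PIV_iff_polynomial {K : Type*} [Field K] {t α β y y' y'' : K} (h2 : (2 : K) ≠ 0)
    (hy : y ≠ 0) :
    y'' = y' ^ 2 / (2 * y) + (3 / 2 : K) * y ^ 3 + 4 * t * y ^ 2 + 2 * (t ^ 2 - α) * y + β / y ↔
      2 * y * y'' = y' ^ 2 + 3 * y ^ 4 + 8 * t * y ^ 3 + 4 * (t ^ 2 - α) * y ^ 2 + 2 * β := by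
  rw [← mul_right_inj' (mul_ne_zero h2 hy)]
  have hclear : 2 * y * (y' ^ 2 / (2 * y) + 3 / 2 * y ^ 3 + 4 * t * y ^ 2
      + 2 * (t ^ 2 - α) * y + β / y) =
      y' ^ 2 + 3 * y ^ 4 + 8 * t * y ^ 3 + 4 * (t ^ 2 - α) * y ^ 2 + 2 * β := by
    field_simp
    ring
  rw [hclear]

theorem SIV_implies_PIV_general {R K : Type*} [CommSemiring R] [Field K] [Algebra R K]
    (h2 : (2 : K) ≠ 0) (D : Derivation R K K) {t v₁ v₂ v₃ q p : K}
    (ht : D t = 1) (hv₁ : D v₁ = 0) (hv₂ : D v₂ = 0) (hq0 : q ≠ 0)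
    (hq : D q = 2 * p * q - q ^ 2 - 2 * t * q + 2 * (v₁ - v₂))
    (hp : D p = 2 * p * q - p ^ 2 + 2 * t * p + 2 * (v₁ - v₃)) :
    D (D q) = D q ^ 2 / (2 * q) + (3 / 2 : K) * q ^ 3 + 4 * t * q ^ 2
      + 2 * (t ^ 2 - (2 * v₃ - v₁ - v₂ + 1)) * q + (-2 * (v₂ - v₁) ^ 2) / q := by
  have hv : D (v₁ - v₂) = 0 := by rw [map_sub, hv₁, hv₂, sub_zero]
  rw [PIV_iff_polynomial h2 hq0]
  linear_combination PIV_polynomial_of_SIV D ht hv hq hp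

/-- If `(q, p)` solves the Hamiltonian system `S_IV(v₁,v₂,v₃)`, then `q` solves
the fourth Painlevé equation `P_IV(α, β)` with `α = 3v₃ + 1` and
`β = −2(v₂ − v₁)²`. -/
theorem SIV_implies_PIV
    {K : Type*} [Field K] [CharZero K] (δ : K → K)
    (hadd : ∀ a b : K, δ (a + b) = δ a + δ b)
    (hleib : ∀ a b : K, δ (a * b) = a * δ b + δ a * b)
    (t : K) (ht : δ t = 1)
    (v₁ v₂ v₃ : K) (hv₁ : δ v₁ = 0) (hv₂ : δ v₂ = 0) (hv₃ : δ v₃ = 0)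
    (hsum : v₁ + v₂ + v₃ = 0)
    (q p : K) (hq0 : q ≠ 0)
    (hq : δ q = 2 * p * q - q ^ 2 - 2 * t * q + 2 * (v₁ - v₂))
    (hp : δ p = 2 * p * q - p ^ 2 + 2 * t * p + 2 * (v₁ - v₃)) :
    δ (δ q) = (δ q) ^ 2 / (2 * q) + (3 / 2 : K) * q ^ 3 + 4 * t * q ^ 2
      + 2 * (t ^ 2 - (3 * v₃ + 1)) * q + (-2 * (v₂ - v₁) ^ 2) / q := by
  rw [show 3 * v₃ + 1 = 2 * v₃ - v₁ - v₂ + 1 by linear_combination hsum]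
  exact SIV_implies_PIV_general two_ne_zero (derivationOfLeibniz δ hadd hleib) ht hv₁ hv₂ hq0 hq hp
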